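/- arXiv:1107.3187 — 2 statements merged into one kernel-verified Lean document; each statement's English description precedes it below -/
import Mathlib

section
/- Let i ∈ F₉ satisfy i² = −1, and let λ, ρ, τ be the images in PGL(2,9) of the matrices [[−1,1],[1,1]], [[0,1+i],[−1,0]], [[1,1],[1,−1]] over F₉. Then the subgroup ⟨ρ,τ⟩ of PGL(2,9) is a dihedral group of order 20, it is a maximal subgroup of PGL(2,9), and λ ∉ ⟨ρ,τ⟩. -/
open Matrix in
/-- The field with 9 elements. -/
noncomputable abbrev F9 : Type := GaloisField 3 2

open Matrix in
/-- `PGL(2,9)`: the quotient of `GL(2,F₉)` by its center. -/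
abbrev PGL29 : Type := GL (Fin 2) F9 ⧸ Subgroup.center (GL (Fin 2) F9)

section Involutions

variable {G : Type*} [Group G] {a b : G}

theorem mul_pow_eq_inv_pow_mul_of_involutions (ha : a * a = 1) (hb : b * b = 1) (k : ℕ) :
    a * (a * b) ^ k = ((a * b) ^ k)⁻¹ * a := by
  have hconj : a * (a * b) * a⁻¹ = (a * b)⁻¹ := by
    rw [mul_inv_rev, ← mul_assoc, ha, one_mul, inv_eq_of_mul_eq_one_left hb]
  rw [← inv_pow, ← hconj, conj_pow, inv_mul_cancel_right]

theorem conj_mul_of_mem_closure_involutions (ha : a * a = 1) (hb : b * b = 1) {h : G}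
    (hh : h ∈ Subgroup.closure {a, b}) :
    h * (a * b) = a * b * h ∨ a * b * h * (a * b) = h := by
  have ha' : a⁻¹ = a := inv_eq_of_mul_eq_one_left ha
  have hb' : b⁻¹ = b := inv_eq_of_mul_eq_one_left hb
  suffices h * (a * b) * h⁻¹ = a * b ∨ h * (a * b) * h⁻¹ = (a * b)⁻¹ by
    refine this.imp (fun h => by rwa [mul_inv_eq_iff_eq_mul] at h) fun h => ?_
    rw [mul_inv_eq_iff_eq_mul] at h
    rw [mul_assoc, h, mul_inv_cancel_left]
  induction hh using Subgroup.closure_induction with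
  | mem y hy =>
    rcases hy with rfl | rfl
    · exact Or.inr (by rw [mul_inv_rev, hb', ← mul_assoc, ha, one_mul, ha'])
    · exact Or.inr (by rw [mul_inv_rev, hb', ha', mul_assoc, mul_assoc, hb, mul_one])
  | one => simp
  | mul y z _ _ hy hz =>
    have hyz : y * z * (a * b) * (y * z)⁻¹ = y * (z * (a * b) * z⁻¹) * y⁻¹ := by group
    rw [hyz]
    rcases hz with hz | hz <;> rw [hz]
    · exact hy
    · rw [← conj_inv]
      rcases hy with hy | hy <;> simp [hy]
  | inv y _ hy =>
    rcases hy with hy | hy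
    · left
      nth_rewrite 1 [← hy]
      group
    · right
      rw [← inv_inj, conj_inv, inv_inv]
      nth_rewrite 1 [← hy]
      group

/-- Two involutions whose product has order `n > 2` generate a dihedral group of order `2 * n`. -/
theorem nonempty_closure_involutions_mulEquiv_dihedralGroup {n : ℕ} (hn : 2 < n)
    (ha : a * a = 1) (hb : b * b = 1) (hab : orderOf (a * b) = n) :
    Nonempty (Subgroup.closure {a, b} ≃* DihedralGroup n) := by
  have : NeZero n := ⟨by omega⟩
  have pow_mod (k : ℕ) : (a * b) ^ (k % n) = (a * b) ^ k := by rw [← hab, pow_mod_orderOf]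
  have pow_add_val (i j : ZMod n) :
      (a * b) ^ (i + j).val = (a * b) ^ i.val * (a * b) ^ j.val := by
    rw [ZMod.val_add, pow_mod, pow_add]
  have pow_sub_val (i j : ZMod n) :
      (a * b) ^ (i - j).val = ((a * b) ^ j.val)⁻¹ * (a * b) ^ i.val := by
    rw [eq_inv_mul_iff_mul_eq, ← pow_add_val, add_sub_cancel]
  have swap := mul_pow_eq_inv_pow_mul_of_involutions ha hb
  let f : DihedralGroup n →* G := MonoidHom.mk'
    (fun g => match g with
      | .r i => (a * b) ^ i.val
      | .sr i => a * (a * b) ^ i.val) (by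
    rintro (i | i) (j | j)
    · simp [pow_add_val]
    · simp only [DihedralGroup.r_mul_sr, pow_sub_val]
      rw [← mul_assoc, ← mul_assoc]
      congr 1
      rw [mul_inv_eq_iff_eq_mul, mul_assoc, swap, mul_inv_cancel_left]
    · simp [pow_add_val, mul_assoc]
    · simp only [DihedralGroup.sr_mul_sr, pow_sub_val]
      rw [swap i.val, ← mul_assoc, mul_assoc _ a a, ha, mul_one])
  have hf : Function.Injective f := by
    rw [injective_iff_map_eq_one]
    rintro (i | i) h
    · have h' : orderOf (a * b) ∣ i.val := orderOf_dvd_of_pow_eq_one h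
      rw [hab] at h'
      rw [← DihedralGroup.r_zero, (ZMod.val_eq_zero i).1 (Nat.eq_zero_of_dvd_of_lt h' i.val_lt)]
    · exfalso
      have h' : a = ((a * b) ^ i.val)⁻¹ := eq_inv_of_mul_eq_one_left h
      have hcomm : a * (a * b) = a * b * a := by
        nth_rewrite 1 [h']
        nth_rewrite 4 [h']
        exact ((Commute.refl (a * b)).pow_left _).inv_left
      have h1 := swap 1
      rw [pow_one, hcomm, mul_left_inj, eq_inv_iff_mul_eq_one, ← sq] at h1
      have := Nat.le_of_dvd two_pos (orderOf_dvd_of_pow_eq_one h1)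
      omega
  have hrange : f.range = Subgroup.closure {a, b} := by
    apply le_antisymm
    · have hamem : a ∈ Subgroup.closure {a, b} := Subgroup.subset_closure (by simp)
      have habmem := mul_mem hamem (Subgroup.subset_closure (by simp) : b ∈ Subgroup.closure {a, b})
      rintro _ ⟨i | i, rfl⟩
      · exact pow_mem habmem _
      · exact mul_mem hamem (pow_mem habmem _)
    · rw [Subgroup.closure_le]
      have hf1 : f (.r 1) = a * b := by
        have : Fact (1 < n) := ⟨by omega⟩
        change (a * b) ^ (1 : ZMod n).val = a * b
        rw [ZMod.val_one, pow_one]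
      have hf0 : f (.sr 0) = a := by
        change a * (a * b) ^ (0 : ZMod n).val = a
        rw [ZMod.val_zero, pow_zero, mul_one]
      rintro _ (rfl | rfl)
      · exact ⟨_, hf0⟩
      · refine ⟨.sr 0 * .r 1, ?_⟩
        rw [map_mul, hf0, hf1, ← mul_assoc, ha, one_mul]
  exact ⟨((MonoidHom.ofInjective hf).trans (MulEquiv.subgroupCongr hrange)).symm⟩

end Involutions

/-- A computable model of the field with nine elements: `ZMod 3` with a square root of `-1`
adjoined. -/
abbrev NineField : Type := QuadraticAlgebra (ZMod 3) (-1) 0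

namespace NineField

open Matrix

instance : Fact (∀ r : ZMod 3, r ^ 2 ≠ -1 + 0 * r) := ⟨by decide⟩

instance : Fintype NineField := .ofEquiv _ (QuadraticAlgebra.equivProd (-1) 0).symm

/-- The adjoined square root of `-1`. -/
def I : NineField := ⟨0, 1⟩

/-- The matrix whose class in `PGL(2,9)` is `λ`. -/
def lam : Matrix (Fin 2) (Fin 2) NineField := !![-1, 1; 1, 1]

/-- The matrix whose class in `PGL(2,9)` is `ρ`. -/
def rho : Matrix (Fin 2) (Fin 2) NineField := !![0, 1 + I; -1, 0]

/-- The matrix whose class in `PGL(2,9)` is `τ`. -/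
def tau : Matrix (Fin 2) (Fin 2) NineField := !![1, 1; 1, -1]

/-- The matrix of the affine map `z ↦ a * z + b`. -/
def affine (a b : NineField) : Matrix (Fin 2) (Fin 2) NineField := !![a, b; 0, 1]

/-- The properties of the set of matrices representing the elements of a subgroup of `PGL(2,9)`
that contains the classes `ρ` and `τ`. -/
structure IsOver (S : Submonoid (Matrix (Fin 2) (Fin 2) NineField)) : Prop where
  smul_mem : ∀ c : NineField, c ≠ 0 → ∀ A ∈ S, c • A ∈ S
  adjugate_mem : ∀ A ∈ S, A.adjugate ∈ S
  rho_mem : rho ∈ S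
  tau_mem : tau ∈ S

namespace IsOver

variable {S : Submonoid (Matrix (Fin 2) (Fin 2) NineField)}

theorem smul_mem_iff (hS : IsOver S) {c : NineField} (hc : c ≠ 0)
    {A : Matrix (Fin 2) (Fin 2) NineField} : c • A ∈ S ↔ A ∈ S := by
  refine ⟨fun h => ?_, hS.smul_mem c hc A⟩
  simpa [smul_smul, hc] using hS.smul_mem c⁻¹ (inv_ne_zero hc) _ h

theorem word_mem (hS : IsOver S) {w : List (Matrix (Fin 2) (Fin 2) NineField)}
    (hw : ∀ A ∈ w, A ∈ S) {B : Matrix (Fin 2) (Fin 2) NineField}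
    (hB : ∃ c : NineField, c ≠ 0 ∧ w.prod = c • B) : B ∈ S := by
  obtain ⟨c, hc, h⟩ := hB
  exact (hS.smul_mem_iff hc).1 (h ▸ S.list_prod_mem hw)

theorem mul_pow_mem_iff (hS : IsOver S) (k : Fin 10) {A : Matrix (Fin 2) (Fin 2) NineField} :
    (rho * tau) ^ k.1 * A ∈ S ↔ A ∈ S := by
  have hX : rho * tau ∈ S := S.mul_mem hS.rho_mem hS.tau_mem
  refine ⟨fun h => ?_, S.mul_mem (S.pow_mem hX _)⟩
  have h' := S.mul_mem (S.pow_mem hX (10 - k.1)) h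
  have hpow : ∃ c : NineField, c ≠ 0 ∧ (rho * tau) ^ 10 = c • 1 := by decide +kernel
  obtain ⟨c, hc, hpow⟩ := hpow
  rw [← mul_assoc, ← pow_add, Nat.sub_add_cancel k.2.le, hpow, smul_mul_assoc, one_mul] at h'
  exact (hS.smul_mem_iff hc).1 h'

/-- The reflection in `⟨ρ, τ⟩` that fixes the point at infinity. -/
theorem reflection_mem (hS : IsOver S) : affine (-1) (1 - I) ∈ S :=
  hS.word_mem (w := [rho, tau, rho, tau, rho, tau, rho])
    (by simp [hS.rho_mem, hS.tau_mem]) (by decide +kernel)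

theorem exists_pow_mul_eq_affine (A : Matrix (Fin 2) (Fin 2) NineField) (hA : A.det ≠ 0) :
    ∃ k : Fin 10, ∃ c a b : NineField, c ≠ 0 ∧ a ≠ 0 ∧ (rho * tau) ^ k.1 * A = c • affine a b := by
  have key : ∀ a c : NineField, ∃ k : Fin 10,
      ((rho * tau) ^ k.1) 1 0 * a + ((rho * tau) ^ k.1) 1 1 * c = 0 := by decide +kernel
  have hX : (rho * tau).det ≠ 0 := by decide +kernel
  obtain ⟨k, hk⟩ := key (A 0 0) (A 1 0)
  set B := (rho * tau) ^ k.1 * A with hB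
  have hB10 : B 1 0 = 0 := by rw [hB, Matrix.mul_apply, Fin.sum_univ_two, hk]
  have hdet : B.det ≠ 0 := by
    rw [hB, det_mul, det_pow]
    exact mul_ne_zero (pow_ne_zero _ hX) hA
  rw [det_fin_two, hB10, mul_zero, sub_zero] at hdet
  have h1 := right_ne_zero_of_mul hdet
  refine ⟨k, B 1 1, B 0 0 / B 1 1, B 0 1 / B 1 1, h1,
    div_ne_zero (left_ne_zero_of_mul hdet) h1, ?_⟩
  rw [← hB, eta_fin_two B, hB10]
  simp [affine, smul_of, mul_div_cancel₀, h1]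

/-- The maps `z ↦ z + 1` and `z ↦ (1 + i) * z` generate the affine group of the line, which
together with `⟨ρ, τ⟩` generates `PGL(2,9)`. -/
theorem mem_of_translation_of_homothety (hS : IsOver S) (h1 : affine 1 1 ∈ S)
    (hw : affine (1 + I) 0 ∈ S) {A : Matrix (Fin 2) (Fin 2) NineField} (hA : A.det ≠ 0) :
    A ∈ S := by
  have powers : ∀ a : NineField, a ≠ 0 → ∃ k : Fin 8, affine (1 + I) 0 ^ k.1 = affine a 0 := by
    decide +kernel
  have homothety (a : NineField) (ha : a ≠ 0) : affine a 0 ∈ S := by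
    obtain ⟨k, hk⟩ := powers a ha
    exact hk ▸ S.pow_mem hw _
  have translation (b : NineField) : affine 1 b ∈ S := by
    rcases eq_or_ne b 0 with rfl | hb
    · exact homothety 1 one_ne_zero
    · have := S.mul_mem (S.mul_mem (homothety b hb) h1) (homothety b⁻¹ (inv_ne_zero hb))
      simpa [affine, hb] using this
  obtain ⟨k, c, a, b, hc, ha, h⟩ := exists_pow_mul_eq_affine A hA
  rw [← hS.mul_pow_mem_iff k, h, hS.smul_mem_iff hc]
  have := S.mul_mem (translation b) (homothety a ha)
  simpa [affine] using this

theorem mem_of_translation (hS : IsOver S) {u : NineField} (hu : u ≠ 0) (h : affine 1 u ∈ S)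
    {A : Matrix (Fin 2) (Fin 2) NineField} (hA : A.det ≠ 0) : A ∈ S := by
  have cases_up_to_sign : ∀ u : NineField, u ≠ 0 → ∃ k : Fin 3,
      affine 1 u ^ k.1 = affine 1 1 ∨ affine 1 u ^ k.1 = affine 1 I ∨
      affine 1 u ^ k.1 = affine 1 (1 + I) ∨ affine 1 u ^ k.1 = affine 1 (1 - I) := by
    decide +kernel
  obtain ⟨k, hk⟩ := cases_up_to_sign u hu
  have hg := S.pow_mem h k.1
  have hr := hS.rho_mem
  have ht := hS.tau_mem
  rcases hk with hk | hk | hk | hk <;> rw [hk] at hg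
  · refine hS.mem_of_translation_of_homothety hg ?_ hA
    exact hS.word_mem (w := [rho, affine 1 1, affine 1 1, tau, affine 1 1])
      (by simp [hr, ht, hg]) (by decide +kernel)
  · refine hS.mem_of_translation_of_homothety ?_ ?_ hA
    · exact hS.word_mem (w := [rho, tau, rho, tau, affine 1 I, affine 1 I, rho, affine 1 I,
        affine 1 I, rho]) (by simp [hr, ht, hg]) (by decide +kernel)
    · exact hS.word_mem (w := [rho, affine 1 I, tau, rho, tau, rho, tau, affine 1 I, affine 1 I])
        (by simp [hr, ht, hg]) (by decide +kernel)
  · refine hS.mem_of_translation_of_homothety ?_ ?_ hA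
    · exact hS.word_mem (w := [rho, affine 1 (1 + I), rho, tau])
        (by simp [hr, ht, hg]) (by decide +kernel)
    · exact hS.word_mem (w := [affine 1 (1 + I), affine 1 (1 + I), rho, tau, rho,
        affine 1 (1 + I), rho]) (by simp [hr, ht, hg]) (by decide +kernel)
  · refine hS.mem_of_translation_of_homothety ?_ ?_ hA
    · exact hS.word_mem (w := [tau, affine 1 (1 - I), tau, affine 1 (1 - I), affine 1 (1 - I),
        rho, tau, rho]) (by simp [hr, ht, hg]) (by decide +kernel)
    · exact hS.word_mem (w := [affine 1 (1 - I), affine 1 (1 - I), tau, rho,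
        affine 1 (1 - I), tau]) (by simp [hr, ht, hg]) (by decide +kernel)

/-- If `a ≠ 1, -1` then a map `z ↦ a * z + b` commuting with the reflection in `⟨ρ, τ⟩`
generates `PGL(2,9)` together with `⟨ρ, τ⟩`. -/
theorem mem_of_homothety (hS : IsOver S) {a : NineField} (ha₀ : a ≠ 0) (ha₁ : a ≠ 1)
    (ha₂ : a ≠ -1) (h : affine a ((a - 1) * (1 - I)) ∈ S)
    {A : Matrix (Fin 2) (Fin 2) NineField} (hA : A.det ≠ 0) : A ∈ S := by
  have quarter_turn : ∀ a : NineField, a ≠ 0 → a ≠ 1 → a ≠ -1 → ∃ j : Fin 3, ∃ k : Fin 2,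
      affine a ((a - 1) * (1 - I)) ^ j.1 * affine (-1) (1 - I) ^ k.1 = affine I (-I) := by
    decide +kernel
  obtain ⟨j, k, hjk⟩ := quarter_turn a ha₀ ha₁ ha₂
  have hg := S.mul_mem (S.pow_mem h j.1) (S.pow_mem hS.reflection_mem k.1)
  rw [hjk] at hg
  have hr := hS.rho_mem
  have ht := hS.tau_mem
  refine hS.mem_of_translation_of_homothety ?_ ?_ hA
  · exact hS.word_mem (w := [affine I (-I), tau, affine I (-I), rho, affine I (-I), rho,
      affine I (-I), affine I (-I)]) (by simp [hr, ht, hg]) (by decide +kernel)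
  · exact hS.word_mem (w := [rho, affine I (-I), rho, affine I (-I), tau, affine I (-I), rho])
      (by simp [hr, ht, hg]) (by decide +kernel)

/-- The maximality of `⟨ρ, τ⟩` in terms of representing matrices. -/
theorem mem_of_mem_of_notMem {S' : Submonoid (Matrix (Fin 2) (Fin 2) NineField)}
    (hS : IsOver S) (hS' : IsOver S') {B : Matrix (Fin 2) (Fin 2) NineField} (hB : B.det ≠ 0)
    (hBS : B ∈ S) (hBS' : B ∉ S') {A : Matrix (Fin 2) (Fin 2) NineField} (hA : A.det ≠ 0) :
    A ∈ S := by
  obtain ⟨k, c, a, b, hc, ha, h⟩ := exists_pow_mul_eq_affine B hB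
  rw [← hS.mul_pow_mem_iff k, h, hS.smul_mem_iff hc] at hBS
  rw [← hS'.mul_pow_mem_iff k, h, hS'.smul_mem_iff hc] at hBS'
  have commutator : ∀ a b : NineField, affine a b * affine (-1) (1 - I) *
      adjugate (affine a b) * affine (-1) (1 - I) = a • affine 1 ((a - 1) * (1 - I) - b) := by
    decide +kernel
  have hcomm := S.mul_mem (S.mul_mem (S.mul_mem hBS hS.reflection_mem)
    (hS.adjugate_mem _ hBS)) hS.reflection_mem
  rw [commutator, hS.smul_mem_iff ha] at hcomm
  rcases eq_or_ne ((a - 1) * (1 - I) - b) 0 with hb | hb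
  · obtain rfl := sub_eq_zero.1 hb
    refine hS.mem_of_homothety ha ?_ ?_ hBS hA
    · rintro rfl
      refine hBS' ?_
      convert S'.one_mem
      decide +kernel
    · rintro rfl
      refine hBS' ?_
      convert hS'.reflection_mem using 1
      decide +kernel
  · exact hS.mem_of_translation hb hcomm hA

end IsOver

/-- A square root of `-1` in `F9` identifies the model with `F9`. -/
theorem exists_ringEquiv (i : F9) (hi : i ^ 2 = -1) : ∃ e : NineField ≃+* F9, e I = i := by
  let f : NineField →ₐ[ZMod 3] F9 := QuadraticAlgebra.lift ⟨i, by simp [← sq, hi]⟩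
  have hcard : Nat.card F9 ≤ Nat.card NineField := by
    rw [GaloisField.card 3 2 two_ne_zero, Nat.card_eq_fintype_card]
    decide +kernel
  refine ⟨RingEquiv.ofBijective f (f.injective.bijective_of_nat_card_le hcard), ?_⟩
  simp [f, QuadraticAlgebra.lift, I]

/-- The projection to `PGL(2,9)` of the general linear group over the model. -/
noncomputable def proj (e : NineField ≃+* F9) : GL (Fin 2) NineField →* PGL29 :=
  (QuotientGroup.mk' _).comp (GeneralLinearGroup.map (e : NineField →+* F9))

variable {e : NineField ≃+* F9}

theorem exists_map_eq (g : GL (Fin 2) F9) :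
    ∃ h : GL (Fin 2) NineField, GeneralLinearGroup.map (e : NineField →+* F9) h = g := by
  refine ⟨GeneralLinearGroup.map (e.symm : F9 →+* NineField) g, ?_⟩
  ext i j
  simp

theorem proj_surjective : Function.Surjective (proj e) := fun q => by
  obtain ⟨g, rfl⟩ := QuotientGroup.mk_surjective q
  obtain ⟨h, rfl⟩ := exists_map_eq (e := e) g
  exact ⟨h, rfl⟩

theorem proj_eq_one_iff {g : GL (Fin 2) NineField} :
    proj e g = 1 ↔ ∃ c : NineField, g.val = c • 1 := by
  change QuotientGroup.mk _ = _ ↔ _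
  rw [QuotientGroup.eq_one_iff, GeneralLinearGroup.mem_center_iff_val_mem_range_scalar]
  constructor
  · rintro ⟨c, hc⟩
    refine ⟨e.symm c, Matrix.ext fun i j => e.injective ?_⟩
    have h : scalar (Fin 2) c i j = e (g.val i j) := congr_fun₂ hc i j
    rw [← h]
    fin_cases i <;> fin_cases j <;> simp
  · rintro ⟨c, hc⟩
    refine ⟨e c, Matrix.ext fun i j => ?_⟩
    have h : GeneralLinearGroup.map (e : NineField →+* F9) g i j = e (g.val i j) := rfl
    rw [h, hc]
    fin_cases i <;> fin_cases j <;> simp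

theorem proj_eq_proj_iff {g h : GL (Fin 2) NineField} :
    proj e g = proj e h ↔ ∃ c : NineField, g.val = c • h.val := by
  rw [eq_comm, ← inv_mul_eq_one, ← map_inv, ← map_mul, proj_eq_one_iff]
  refine exists_congr fun c => ⟨fun hc => ?_, fun hc => ?_⟩
  · have : g.val = h.val * (h⁻¹ * g).val := by rw [← Units.val_mul, mul_inv_cancel_left]
    rw [this, hc, mul_smul_comm, mul_one]
  · rw [Units.val_mul, hc, mul_smul_comm, ← Units.val_mul, inv_mul_cancel, Units.val_one]

/-- The matrices representing the elements of a subgroup of `PGL(2,9)`. -/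
noncomputable def representatives (e : NineField ≃+* F9) (M : Subgroup PGL29) :
    Submonoid (Matrix (Fin 2) (Fin 2) NineField) :=
  (M.comap (proj e)).toSubmonoid.map (Units.coeHom _)

theorem val_mem_representatives {M : Subgroup PGL29} {g : GL (Fin 2) NineField} :
    g.val ∈ representatives e M ↔ proj e g ∈ M :=
  Submonoid.mem_map_iff_mem (f := Units.coeHom _) Units.val_injective

theorem isOver_representatives {M : Subgroup PGL29} {R T : GL (Fin 2) NineField}
    (hR : R.val = rho) (hT : T.val = tau) (hRM : proj e R ∈ M) (hTM : proj e T ∈ M) :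
    IsOver (representatives e M) where
  smul_mem := by
    rintro c hc _ ⟨g, hg, rfl⟩
    have hval : (Units.mk0 c hc • g).val = c • g.val := rfl
    refine ⟨Units.mk0 c hc • g, ?_, rfl⟩
    change proj e _ ∈ M
    rwa [proj_eq_proj_iff.2 ⟨c, hval⟩]
  adjugate_mem := by
    rintro _ ⟨g, hg, rfl⟩
    have hdet : g.val.det ≠ 0 := g.det.ne_zero
    have hval : (g⁻¹).val = (g.val.det)⁻¹ • g.val.adjugate := by
      rw [GeneralLinearGroup.coe_inv, Matrix.inv_def, Ring.inverse_eq_inv']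
    have hval' : (Units.mk0 _ hdet • g⁻¹).val = g.val.det • g⁻¹.val := rfl
    refine ⟨Units.mk0 _ hdet • g⁻¹, ?_, ?_⟩
    · change proj e _ ∈ M
      rw [proj_eq_proj_iff.2 ⟨_, hval'⟩, map_inv]
      exact inv_mem hg
    · change (Units.mk0 _ hdet • g⁻¹).val = _
      rw [hval', hval, smul_smul, mul_inv_cancel₀ hdet, one_smul]
      rfl
  rho_mem := hR ▸ val_mem_representatives.2 hRM
  tau_mem := hT ▸ val_mem_representatives.2 hTM

end NineField

open NineField Matrix in
/-- With `λ, ρ, τ` the images in `PGL(2,9)` of the given matrices, `⟨ρ,τ⟩` is a dihedral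
group of order 20, it is a maximal subgroup of `PGL(2,9)`, and `λ ∉ ⟨ρ,τ⟩`. -/
theorem stmt10 (i : F9) (hi : i ^ 2 = -1)
    (Ml Mr Mt : Matrix.GeneralLinearGroup (Fin 2) F9)
    (hMl : (Ml : Matrix (Fin 2) (Fin 2) F9) = !![-1, 1; 1, 1])
    (hMr : (Mr : Matrix (Fin 2) (Fin 2) F9) = !![0, 1 + i; -1, 0])
    (hMt : (Mt : Matrix (Fin 2) (Fin 2) F9) = !![1, 1; 1, -1]) :
    Nonempty ((Subgroup.closure {(QuotientGroup.mk Mr : PGL29), QuotientGroup.mk Mt} :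
        Subgroup PGL29) ≃* DihedralGroup 10) ∧
    Subgroup.closure {(QuotientGroup.mk Mr : PGL29), QuotientGroup.mk Mt} ≠ ⊤ ∧
    (∀ M : Subgroup PGL29,
      Subgroup.closure {(QuotientGroup.mk Mr : PGL29), QuotientGroup.mk Mt} < M → M = ⊤) ∧
    (QuotientGroup.mk Ml : PGL29) ∉
      Subgroup.closure {(QuotientGroup.mk Mr : PGL29), QuotientGroup.mk Mt} := by
  obtain ⟨e, rfl⟩ := exists_ringEquiv i hi
  obtain ⟨L, rfl⟩ := exists_map_eq (e := e) Ml
  obtain ⟨R, rfl⟩ := exists_map_eq (e := e) Mr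
  obtain ⟨T, rfl⟩ := exists_map_eq (e := e) Mt
  have val_eq {g : GL (Fin 2) NineField} {A : Matrix (Fin 2) (Fin 2) NineField}
      (h : (GeneralLinearGroup.map (e : NineField →+* F9) g).val = A.map e) : g.val = A :=
    Matrix.map_injective e.injective h
  have hL : L.val = lam := val_eq <| hMl.trans <| by rw [eta_fin_two (Matrix.map _ _)]; simp [lam]
  have hR : R.val = rho := val_eq <| hMr.trans <| by rw [eta_fin_two (Matrix.map _ _)]; simp [rho]
  have hT : T.val = tau := val_eq <| hMt.trans <| by rw [eta_fin_two (Matrix.map _ _)]; simp [tau]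
  change Nonempty (Subgroup.closure {proj e R, proj e T} ≃* _) ∧
    Subgroup.closure {proj e R, proj e T} ≠ ⊤ ∧
    (∀ M, Subgroup.closure {proj e R, proj e T} < M → M = ⊤) ∧
    proj e L ∉ Subgroup.closure {proj e R, proj e T}
  have hRR : proj e R * proj e R = 1 := by
    rw [← map_mul, proj_eq_one_iff, Units.val_mul, hR]
    decide +kernel
  have hTT : proj e T * proj e T = 1 := by
    rw [← map_mul, proj_eq_one_iff, Units.val_mul, hT]
    decide +kernel
  have horder : orderOf (proj e R * proj e T) = 10 := by
    have pow_eq_one_iff (k : ℕ) : (proj e R * proj e T) ^ k = 1 ↔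
        ∃ c : NineField, (rho * tau) ^ k = c • 1 := by
      rw [← map_mul, ← map_pow, proj_eq_one_iff, Units.val_pow_eq_pow_val, Units.val_mul, hR, hT]
    refine orderOf_eq_of_pow_and_pow_div_prime (by norm_num) ?_ fun p hp hpd => ?_
    · rw [pow_eq_one_iff]
      decide +kernel
    · have hp' : p = 2 ∨ p = 5 := by
        have := Nat.le_of_dvd (by norm_num) hpd
        interval_cases p <;> revert hp hpd <;> norm_num
      rcases hp' with rfl | rfl <;> rw [Ne, pow_eq_one_iff] <;> decide +kernel
  have hlam : proj e L ∉ Subgroup.closure {proj e R, proj e T} := fun h => by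
    have := conj_mul_of_mem_closure_involutions hRR hTT h
    simp only [← map_mul, proj_eq_proj_iff, Units.val_mul, hL, hR, hT] at this
    revert this
    decide +kernel
  refine ⟨nonempty_closure_involutions_mulEquiv_dihedralGroup (by norm_num) hRR hTT horder,
    fun h => hlam (h ▸ Subgroup.mem_top _), fun M hM => ?_, hlam⟩
  have hRmem : proj e R ∈ Subgroup.closure {proj e R, proj e T} :=
    Subgroup.subset_closure (by simp)
  have hTmem : proj e T ∈ Subgroup.closure {proj e R, proj e T} :=
    Subgroup.subset_closure (by simp)
  obtain ⟨q, hqM, hq⟩ := SetLike.exists_of_lt hM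
  obtain ⟨g, rfl⟩ := proj_surjective (e := e) q
  rw [eq_top_iff]
  rintro q' -
  obtain ⟨g', rfl⟩ := proj_surjective (e := e) q'
  rw [← val_mem_representatives] at hqM hq ⊢
  exact (isOver_representatives hR hT (hM.le hRmem) (hM.le hTmem)).mem_of_mem_of_notMem
    (isOver_representatives hR hT hRmem hTmem) g.det.ne_zero hqM hq g'.det.ne_zero
end

section
/- PGL(2,9) has exactly 12 subgroups isomorphic to the alternating group A_5, and these 12 subgroups form a single conjugacy class under conjugation in PGL(2,9); moreover, each of the 36 Sylow 5-subgroups of PGL(2,9) is contained in exactly two of these 12 subgroups. -/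
/-- A computable model `𝔽₃(i)` of the field with nine elements. -/
abbrev K9 : Type := QuadraticAlgebra (ZMod 3) (-1) 0

instance : Fintype K9 := Fintype.ofEquiv _ (QuadraticAlgebra.equivProd (-1 : ZMod 3) 0).symm

/-- Two by two matrices over the computable field with nine elements. -/
abbrev Mat9 : Type := Matrix (Fin 2) (Fin 2) K9

/-- A matrix whose class in `PGL(2,9)` has order 10. -/
def dMat : Mat9 := !![0, ⟨1, 1⟩; 1, 1]

/-- A matrix whose class in `PGL(2,9)` is an involution. -/
def xMat : Mat9 := !![0, 1; 1, 0]

/-- The involutions `dⁱ x d⁻ⁱ`, up to scalars. -/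
def conjMat : Fin 10 → Mat9 :=
  ![!![0, 1; 1, 0], !![1, ⟨2, 2⟩; 0, 2], !![1, 0; ⟨2, 2⟩, 2], !![1, 1; 1, 2],
    !![1, ⟨1, 1⟩; ⟨2, 1⟩, 2], !![1, ⟨0, 1⟩; 0, 2], !![1, 0; 2, 2], !![0, 1; ⟨0, 1⟩, 0],
    !![1, ⟨2, 2⟩; 1, 2], !![1, ⟨1, 1⟩; 2, 2]]

/-- The rotation `k ↦ k + 1`, an element of order 5 of `A₅`. -/
def rot5 : alternatingGroup (Fin 5) := ⟨finRotate 5, Equiv.Perm.mem_alternatingGroup.mpr (by decide)⟩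

/-- The double transposition `(0 1)(3 4)`. -/
def dbl5 : alternatingGroup (Fin 5) :=
  ⟨Equiv.swap 0 1 * Equiv.swap 3 4, Equiv.Perm.mem_alternatingGroup.mpr (by decide)⟩

/-- The involution `v` of the Klein four-group on `{1, 2, 3, 4}` with `v 3 = j`. -/
def klein (j : Fin 5) : Fin 5 → Fin 5 :=
  (![id, ![0, 3, 4, 1, 2], ![0, 4, 3, 2, 1], id, ![0, 2, 1, 4, 3]] : Fin 5 → Fin 5 → Fin 5) j

/-- Powers of `d ^ 2`, up to scalars. -/
def rotMat : Fin 5 → Mat9 :=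
  ![1, !![1, 1; ⟨2, 1⟩, ⟨0, 1⟩], !![1, ⟨1, 2⟩; ⟨0, 2⟩, ⟨1, 2⟩], !![1, 2; ⟨1, 2⟩, ⟨2, 2⟩],
    !![1, ⟨0, 1⟩; ⟨2, 2⟩, ⟨0, 2⟩]]

/-- Matrices representing the Klein four-group, indexed by the image of `3`. -/
def kleinMat : Fin 5 → Mat9 :=
  ![1, !![1, 2; ⟨1, 1⟩, 2], !![1, 2; ⟨1, 2⟩, 2], 1, !![1, 0; 2, 2]]

/-- Matrices representing the powers of the 3-cycle `(1 2 4)`, indexed by the image of `1`. -/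
def triMat : Fin 5 → Mat9 :=
  ![1, 1, !![1, ⟨2, 1⟩; ⟨1, 1⟩, ⟨1, 1⟩], 1, !![1, ⟨0, 2⟩; 2, ⟨2, 1⟩]]

/-- A matrix representing an even permutation, computed from its factorisation into a rotation,
an element of the Klein four-group on `{1, 2, 3, 4}` and a power of the 3-cycle `(1 2 4)`. -/
def altMat (σ : alternatingGroup (Fin 5)) : Mat9 :=
  rotMat (σ.1 0) * kleinMat (σ.1 3 - σ.1 0) * triMat (klein (σ.1 3 - σ.1 0) (σ.1 1 - σ.1 0))

theorem K9.eq_zero_or_eq_zero_of_mul_eq_zero :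
    ∀ x y : K9, x * y = 0 → x = 0 ∨ y = 0 := by
  decide +kernel

theorem det_dMat_ne_zero : dMat.det ≠ 0 := by decide +kernel

theorem det_xMat_ne_zero : xMat.det ≠ 0 := by decide +kernel

theorem det_altMat_ne_zero : ∀ σ, (altMat σ).det ≠ 0 := by
  decide +kernel

theorem altMat_mul_rot5 : ∀ σ, ∃ s : K9, altMat (σ * rot5) = s • (altMat σ * (dMat * dMat)) := by
  decide +kernel

theorem altMat_mul_dbl5 : ∀ σ, ∃ s : K9, altMat (σ * dbl5) = s • (altMat σ * xMat) := by
  decide +kernel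

theorem altMat_one : altMat 1 = 1 := by decide +kernel

theorem altMat_mul_dMat_ne :
    ∀ σ, ∀ s : K9, altMat σ * dMat ≠ s • (dMat * xMat) := by
  decide +kernel

theorem conjMat_mul_dMat_pow : ∀ i : Fin 10, ∃ s : K9,
    dMat ^ (i : ℕ) * xMat = s • (conjMat i * dMat ^ (i : ℕ)) := by
  decide +kernel

theorem exists_eq_smul_conjMat : ∀ a b c : K9, a * a + b * c ≠ 0 →
    (b + ⟨1, 1⟩ * c - a) * (b + ⟨1, 1⟩ * c - a) = -(a * a + b * c) * ⟨0, 2⟩ →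
    ∃ i : Fin 10, ∃ s : K9, conjMat i = s • !![a, b; c, -a] := by
  decide +kernel

theorem det_eq_zero_of_mul_dMat_sq_scalar : ∀ a b c : K9,
    a * ⟨1, 1⟩ + b * ⟨2, 1⟩ = 0 → c * ⟨1, 1⟩ - a = 0 →
    a * ⟨1, 1⟩ + b = c * ⟨1, 1⟩ - a * ⟨2, 1⟩ → a * a + b * c = 0 := by
  decide +kernel

theorem dMat_sq : dMat ^ 2 = !![⟨1, 1⟩, ⟨1, 1⟩; 1, ⟨2, 1⟩] := by decide +kernel

theorem exists_factorisation : ∀ σ : alternatingGroup (Fin 5), ∃ i : Fin 5, ∃ j k : Fin 3,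
    ∃ l : Fin 2, σ = rot5 ^ (i : ℕ) * (dbl5 * rot5) ^ (j : ℕ) *
      (rot5 ^ 3 * dbl5 * rot5 ^ 2) ^ (l : ℕ) * (dbl5 * rot5) ^ (k : ℕ) := by
  decide +kernel

theorem exists_involution_of_order_five : ∀ u : alternatingGroup (Fin 5), u ^ 5 = 1 → u ≠ 1 →
    ∃ y : alternatingGroup (Fin 5), y ^ 2 = 1 ∧ y ≠ 1 ∧ (y * u) ^ 3 = 1 := by
  decide +kernel

theorem exists_dbl5_eq_mul : ∃ u v : alternatingGroup (Fin 5),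
    u ^ 5 = 1 ∧ v ^ 5 = 1 ∧ dbl5 = u * v := by
  decide +kernel

theorem closure_rot5_dbl5 : Subgroup.closure {rot5, dbl5} = ⊤ := by
  refine (Subgroup.eq_top_iff' _).mpr fun σ => ?_
  have hr : rot5 ∈ Subgroup.closure {rot5, dbl5} := Subgroup.subset_closure (by simp)
  have hd : dbl5 ∈ Subgroup.closure {rot5, dbl5} := Subgroup.subset_closure (by simp)
  obtain ⟨i, j, k, l, rfl⟩ := exists_factorisation σ
  exact mul_mem (mul_mem (mul_mem (pow_mem hr _) (pow_mem (mul_mem hd hr) _))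
    (pow_mem (mul_mem (mul_mem (pow_mem hr _) hd) (pow_mem hr _)) _)) (pow_mem (mul_mem hd hr) _)

theorem card_alternatingGroup_five : Nat.card (alternatingGroup (Fin 5)) = 60 := by
  rw [nat_card_alternatingGroup, Nat.card_eq_fintype_card, Fintype.card_fin]
  rfl

theorem factorization_five_mul {m : ℕ} (hm : ¬ 5 ∣ m) : (5 * m).factorization 5 = 1 := by
  rw [Nat.factorization_mul (by norm_num) (by rintro rfl; simp at hm), Finsupp.add_apply,
    Nat.Prime.factorization_self (by norm_num), Nat.factorization_eq_zero_of_not_dvd hm]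

theorem card_sylow_five_alternatingGroup_five :
    Nat.card (Sylow 5 (alternatingGroup (Fin 5))) = 6 := by
  have : Fact (Nat.Prime 5) := ⟨by norm_num⟩
  let P : Sylow 5 (alternatingGroup (Fin 5)) := default
  have hcard : Nat.card (P : Subgroup (alternatingGroup (Fin 5))) = 5 := by
    rw [P.card_eq_multiplicity, card_alternatingGroup_five,
      factorization_five_mul (m := 12) (by norm_num), pow_one]
  have hindex : (P : Subgroup (alternatingGroup (Fin 5))).index = 12 := by
    have := (P : Subgroup (alternatingGroup (Fin 5))).card_mul_index
    rw [hcard, card_alternatingGroup_five] at this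
    omega
  have hdvd := P.card_dvd_index
  rw [hindex] at hdvd
  have hmod := card_sylow_modEq_one 5 (alternatingGroup (Fin 5))
  have hne : Nat.card (Sylow 5 (alternatingGroup (Fin 5))) ≠ 1 := by
    intro h
    have : Subsingleton (Sylow 5 (alternatingGroup (Fin 5))) :=
      (Nat.card_eq_one_iff_unique.mp h).1
    have hn : (P : Subgroup (alternatingGroup (Fin 5))).Normal := P.normal_of_subsingleton
    rcases hn.eq_bot_or_eq_top with h | h
    · rw [h, Subgroup.card_bot] at hcard
      omega
    · rw [h, Subgroup.card_top, card_alternatingGroup_five] at hcard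
      omega
  have hle := Nat.le_of_dvd (by norm_num) hdvd
  unfold Nat.ModEq at hmod
  interval_cases h : Nat.card (Sylow 5 (alternatingGroup (Fin 5))) <;> omega

/-- A subgroup isomorphic to `A₅`. -/
def IsAltFive {G : Type*} [Group G] (H : Subgroup G) : Prop :=
  Nonempty (H ≃* alternatingGroup (Fin 5))

theorem IsAltFive.card {G : Type*} [Group G] {H : Subgroup G} (hH : IsAltFive H) :
    Nat.card H = 60 := by
  obtain ⟨e⟩ := hH
  rw [Nat.card_congr e.toEquiv, card_alternatingGroup_five]

theorem isAltFive_map_conj {G : Type*} [Group G] {H : Subgroup G} (g : G) :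
    IsAltFive (H.map (MulAut.conj g).toMonoidHom) ↔ IsAltFive H :=
  have e : H ≃* H.map (MulAut.conj g).toMonoidHom := (MulAut.conj g).subgroupMap H
  ⟨fun ⟨f⟩ => ⟨e.trans f⟩, fun ⟨f⟩ => ⟨e.symm.trans f⟩⟩

theorem mem_map_conj {G : Type*} [Group G] {H : Subgroup G} {g x : G} :
    x ∈ H.map (MulAut.conj g).toMonoidHom ↔ g⁻¹ * x * g ∈ H := by
  constructor
  · rintro ⟨y, hy, rfl⟩
    simpa [mul_assoc] using hy
  · intro h
    exact ⟨_, h, by simp [mul_assoc]⟩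

theorem map_conj_map_conj {G : Type*} [Group G] (H : Subgroup G) (g h : G) :
    (H.map (MulAut.conj h).toMonoidHom).map (MulAut.conj g).toMonoidHom =
      H.map (MulAut.conj (g * h)).toMonoidHom := by
  ext x
  simp [mul_assoc]

theorem map_conj_eq_iff {G : Type*} [Group G] {H K : Subgroup G} {g : G} :
    H.map (MulAut.conj g).toMonoidHom = K ↔ H = K.map (MulAut.conj g⁻¹).toMonoidHom := by
  constructor
  · rintro rfl
    ext x
    simp [mul_assoc]
  · rintro rfl
    ext x
    simp [mul_assoc]

/-- A copy of `A₅` in `G` together with an element `d` whose square is the image of `rot5`, such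
that conjugation by powers of `d` accounts for all involutions `y` with `(y * d ^ 2) ^ 3 = 1`. -/
structure AltFiveData (G : Type*) [Group G] where
  /-- The embedding of `A₅`. -/
  hom : alternatingGroup (Fin 5) →* G
  /-- The square root of the image of `rot5`. -/
  d : G
  map_rot5 : hom rot5 = d ^ 2
  sq_ne_one : d ^ 2 ≠ 1
  exists_conj : ∀ y : G, y ^ 2 = 1 → y ≠ 1 → (y * d ^ 2) ^ 3 = 1 →
    ∃ i : ℕ, y = d ^ i * hom dbl5 * (d ^ i)⁻¹
  conj_notMem : d * hom dbl5 * d⁻¹ ∉ hom.range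

namespace AltFiveData

variable {G : Type*} [Group G]

section

variable (D : AltFiveData G)

theorem hom_injective : Function.Injective D.hom := by
  rw [← MonoidHom.ker_eq_bot_iff]
  refine (MonoidHom.normal_ker D.hom).eq_bot_or_eq_top.resolve_right fun h => D.sq_ne_one ?_
  rw [← D.map_rot5, ← MonoidHom.mem_ker, h]
  trivial

theorem isAltFive_range : IsAltFive D.hom.range :=
  ⟨(MonoidHom.ofInjective D.hom_injective).symm⟩

theorem sq_mem_range : D.d ^ 2 ∈ D.hom.range := ⟨rot5, D.map_rot5⟩

theorem sq_pow_five : (D.d ^ 2) ^ 5 = 1 := by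
  have h : rot5 ^ 5 = 1 := by decide +kernel
  rw [← D.map_rot5, ← map_pow, h, map_one]

theorem orderOf_sq : orderOf (D.d ^ 2) = 5 := by
  have : Fact (Nat.Prime 5) := ⟨by norm_num⟩
  exact orderOf_eq_prime D.sq_pow_five D.sq_ne_one

theorem range_le {H : Subgroup G} (i : ℕ) (hc : D.d ^ 2 ∈ H)
    (hx : D.d ^ i * D.hom dbl5 * (D.d ^ i)⁻¹ ∈ H) :
    D.hom.range.map (MulAut.conj (D.d ^ i)).toMonoidHom ≤ H := by
  rw [MonoidHom.range_eq_map, ← closure_rot5_dbl5, MonoidHom.map_closure, MonoidHom.map_closure,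
    Subgroup.closure_le]
  rintro _ ⟨_, ⟨σ, rfl | rfl, rfl⟩, rfl⟩
  · rw [D.map_rot5]
    have h : D.d ^ i * D.d ^ 2 * (D.d ^ i)⁻¹ = D.d ^ 2 := by
      rw [← pow_add, add_comm, pow_add, mul_inv_cancel_right]
    change D.d ^ i * D.d ^ 2 * (D.d ^ i)⁻¹ ∈ H
    rwa [h]
  · exact hx

theorem map_conj_even (i : ℕ) :
    D.hom.range.map (MulAut.conj (D.d ^ (2 * i))).toMonoidHom = D.hom.range := by
  have h : D.d ^ (2 * i) ∈ D.hom.range := by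
    rw [pow_mul]
    exact pow_mem D.sq_mem_range i
  ext x
  rw [mem_map_conj, Subgroup.mul_mem_cancel_right _ h,
    Subgroup.mul_mem_cancel_left _ (inv_mem h)]

theorem exists_eq_map_conj {H : Subgroup G} (hH : IsAltFive H) (hc : D.d ^ 2 ∈ H) :
    ∃ i : ℕ, H = D.hom.range.map (MulAut.conj (D.d ^ i)).toMonoidHom := by
  have hcard := hH.card
  have : Finite H := Nat.finite_of_card_ne_zero (by rw [hcard]; norm_num)
  obtain ⟨e⟩ := id hH
  obtain ⟨y, hy2, hy1, hy3⟩ := exists_involution_of_order_five (e ⟨_, hc⟩)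
    (by rw [← map_pow, ← map_one e]; exact congrArg e (Subtype.ext D.sq_pow_five))
    (by
      rw [← map_one e, e.injective.ne_iff]
      exact fun h => D.sq_ne_one (congrArg Subtype.val h))
  obtain ⟨z, rfl⟩ := e.surjective y
  rw [← map_pow, ← map_one e, e.injective.eq_iff] at hy2
  rw [← map_one e, e.injective.ne_iff] at hy1
  rw [← map_mul, ← map_pow, ← map_one e, e.injective.eq_iff] at hy3
  obtain ⟨i, hi⟩ := D.exists_conj z (congrArg Subtype.val hy2)
    (fun h => hy1 (Subtype.ext h)) (congrArg Subtype.val hy3)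
  refine ⟨i, (Subgroup.eq_of_le_of_card_ge (D.range_le i hc (hi ▸ z.2)) ?_).symm⟩
  rw [hcard, ((isAltFive_map_conj _).mpr D.isAltFive_range).card]

theorem eq_range_or_eq_map_conj {H : Subgroup G} (hH : IsAltFive H) (hc : D.d ^ 2 ∈ H) :
    H = D.hom.range ∨ H = D.hom.range.map (MulAut.conj D.d).toMonoidHom := by
  obtain ⟨i, rfl⟩ := D.exists_eq_map_conj hH hc
  obtain ⟨k, rfl | rfl⟩ := Nat.even_or_odd' i
  · exact .inl (D.map_conj_even k)
  · right
    rw [pow_succ', ← map_conj_map_conj, D.map_conj_even]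

theorem sq_mem_map_conj : D.d ^ 2 ∈ D.hom.range.map (MulAut.conj D.d).toMonoidHom := by
  rw [mem_map_conj]
  convert D.sq_mem_range using 1
  group

theorem range_ne_map_conj :
    D.hom.range ≠ D.hom.range.map (MulAut.conj D.d).toMonoidHom := by
  intro h
  refine D.conj_notMem ?_
  rw [h, mem_map_conj]
  exact ⟨dbl5, by group⟩

theorem setOf_isAltFive_sq_mem : {H : Subgroup G | IsAltFive H ∧ D.d ^ 2 ∈ H} =
    {D.hom.range, D.hom.range.map (MulAut.conj D.d).toMonoidHom} := by
  ext H
  constructor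
  · exact fun h => D.eq_range_or_eq_map_conj h.1 h.2
  · rintro (rfl | rfl)
    · exact ⟨D.isAltFive_range, D.sq_mem_range⟩
    · exact ⟨(isAltFive_map_conj _).mpr D.isAltFive_range, D.sq_mem_map_conj⟩

end

theorem exists_conj_zpowers [Finite G] (D : AltFiveData G) (hG : Nat.card G = 720)
    {u : G} (hu : orderOf u = 5) : ∃ g : G,
    (Subgroup.zpowers u).map (MulAut.conj g).toMonoidHom = Subgroup.zpowers (D.d ^ 2) := by
  have : Fact (Nat.Prime 5) := ⟨by norm_num⟩
  have h5 : 5 ^ (Nat.card G).factorization 5 = 5 := by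
    rw [hG, factorization_five_mul (m := 144) (by norm_num), pow_one]
  let P : Sylow 5 G := Sylow.ofCard (Subgroup.zpowers u) (by rw [h5, Nat.card_zpowers, hu])
  let Q : Sylow 5 G := Sylow.ofCard (Subgroup.zpowers (D.d ^ 2))
    (by rw [h5, Nat.card_zpowers, D.orderOf_sq])
  obtain ⟨g, hg⟩ := MulAction.exists_smul_eq G P Q
  exact ⟨g, congrArg Sylow.toSubgroup hg⟩

theorem exists_zpowers_eq [Finite G] (hG : Nat.card G = 720) (S : Sylow 5 G) :
    ∃ u : G, orderOf u = 5 ∧ Subgroup.zpowers u = (S : Subgroup G) := by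
  have : Fact (Nat.Prime 5) := ⟨by norm_num⟩
  have hcard : Nat.card (S : Subgroup G) = 5 := by
    rw [S.card_eq_multiplicity, hG, factorization_five_mul (m := 144) (by norm_num), pow_one]
  obtain ⟨u, hu⟩ := exists_prime_orderOf_dvd_card' (G := (S : Subgroup G)) 5 (by rw [hcard])
  have hu' : orderOf (u : G) = 5 := by rw [Subgroup.orderOf_coe, hu]
  refine ⟨u, hu', Subgroup.eq_of_le_of_card_ge (by simp) ?_⟩
  rw [hcard, Nat.card_zpowers, hu']

theorem exists_map_conj_eq_range [Finite G] (D : AltFiveData G) (hG : Nat.card G = 720)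
    {H : Subgroup G} (hH : IsAltFive H) :
    ∃ g : G, H.map (MulAut.conj g).toMonoidHom = D.hom.range := by
  have : Fact (Nat.Prime 5) := ⟨by norm_num⟩
  obtain ⟨u, hu⟩ := exists_prime_orderOf_dvd_card' (G := H) 5 (by rw [hH.card]; norm_num)
  obtain ⟨g, hg⟩ := D.exists_conj_zpowers hG (u := u) (by rw [Subgroup.orderOf_coe, hu])
  have hmem : D.d ^ 2 ∈ H.map (MulAut.conj g).toMonoidHom := by
    have h : D.d ^ 2 ∈ Subgroup.zpowers (D.d ^ 2) := Subgroup.mem_zpowers _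
    rw [← hg] at h
    exact Subgroup.map_mono (by simp) h
  obtain ⟨i, hi⟩ := D.exists_eq_map_conj ((isAltFive_map_conj g).mpr hH) hmem
  refine ⟨(D.d ^ i)⁻¹ * g, ?_⟩
  rw [← map_conj_map_conj, hi, map_conj_map_conj]
  ext x
  simp

theorem isAltFive_conjugate [Finite G] (D : AltFiveData G) (hG : Nat.card G = 720)
    {H K : Subgroup G} (hH : IsAltFive H) (hK : IsAltFive K) :
    ∃ g : G, H.map (MulAut.conj g).toMonoidHom = K := by
  obtain ⟨g, hg⟩ := D.exists_map_conj_eq_range hG hH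
  obtain ⟨k, hk⟩ := D.exists_map_conj_eq_range hG hK
  refine ⟨k⁻¹ * g, ?_⟩
  rw [← map_conj_map_conj, hg, ← map_conj_eq_iff.mp hk]

theorem card_isAltFive_above_sylow [Finite G] (D : AltFiveData G) (hG : Nat.card G = 720)
    (S : Sylow 5 G) :
    Nat.card {H : Subgroup G // IsAltFive H ∧ (S : Subgroup G) ≤ H} = 2 := by
  obtain ⟨u, hu, hS⟩ := exists_zpowers_eq hG S
  obtain ⟨g, hg⟩ := D.exists_conj_zpowers hG hu
  have hiff : ∀ H : Subgroup G, IsAltFive H ∧ (S : Subgroup G) ≤ H ↔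
      (MulAut.conj g).mapSubgroup H ∈ {H : Subgroup G | IsAltFive H ∧ D.d ^ 2 ∈ H} := by
    intro H
    rw [← hS, Set.mem_ofPred_eq, ← Subgroup.zpowers_le, ← hg]
    exact and_congr (isAltFive_map_conj g).symm
      (Subgroup.map_le_map_iff_of_injective (MulAut.conj g).injective).symm
  rw [Nat.card_congr ((MulAut.conj g).mapSubgroup.toEquiv.subtypeEquiv hiff)]
  change Nat.card {H : Subgroup G | IsAltFive H ∧ D.d ^ 2 ∈ H} = 2
  rw [Nat.card_coe_set_eq, D.setOf_isAltFive_sq_mem, Set.ncard_pair D.range_ne_map_conj]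

theorem card_sylow_below_isAltFive [Finite G] (hG : Nat.card G = 720) {H : Subgroup G}
    (hH : IsAltFive H) : Nat.card {S : Sylow 5 G // (S : Subgroup G) ≤ H} = 6 := by
  have : Fact (Nat.Prime 5) := ⟨by norm_num⟩
  obtain ⟨e⟩ := hH
  let φ : alternatingGroup (Fin 5) →* G := H.subtype.comp e.symm.toMonoidHom
  have hφ : Function.Injective φ := Subtype.coe_injective.comp e.symm.injective
  have hrange : φ.range = H := by
    ext x
    exact ⟨fun ⟨y, hy⟩ => hy ▸ (e.symm y).2, fun hx => ⟨e ⟨x, hx⟩, by simp [φ]⟩⟩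
  rw [← card_sylow_five_alternatingGroup_five]
  refine Nat.card_eq_of_bijective
    (fun S => S.1.comapOfInjective φ hφ (hrange.symm ▸ S.2)) ⟨fun S T h => ?_, fun P => ?_⟩
  · have h' := congrArg (fun Q : Sylow 5 _ => (Q : Subgroup _).map φ) h
    simp only [Sylow.coe_comapOfInjective, Subgroup.map_comap_eq, hrange,
      inf_eq_right.mpr S.2, inf_eq_right.mpr T.2] at h'
    exact Subtype.ext (Sylow.ext h')
  · obtain ⟨Q, hQ⟩ := P.exists_comap_eq_of_injective hφ
    have hQH : (Q : Subgroup G) ≤ H := by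
      have hle : (P : Subgroup (alternatingGroup (Fin 5))).map φ ≤ Q :=
        Subgroup.map_le_iff_le_comap.mpr hQ.ge
      rw [← Subgroup.eq_of_le_of_card_ge hle, ← hrange]
      · exact Subgroup.map_le_range _ _
      · rw [Subgroup.card_map_of_injective hφ, P.card_eq_multiplicity, Q.card_eq_multiplicity,
          card_alternatingGroup_five, hG, factorization_five_mul (m := 144) (by norm_num),
          factorization_five_mul (m := 12) (by norm_num)]
    exact ⟨⟨Q, hQH⟩, Sylow.ext hQ⟩

theorem card_sylow_eq_three_mul [Finite G] (D : AltFiveData G) (hG : Nat.card G = 720) :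
    Nat.card (Sylow 5 G) = 3 * Nat.card {H : Subgroup G // IsAltFive H} := by
  have e : (Σ S : Sylow 5 G, {H : Subgroup G // IsAltFive H ∧ (S : Subgroup G) ≤ H}) ≃
      Σ H : {H : Subgroup G // IsAltFive H}, {S : Sylow 5 G // (S : Subgroup G) ≤ H} :=
    { toFun := fun p => ⟨⟨p.2.1, p.2.2.1⟩, ⟨p.1, p.2.2.2⟩⟩
      invFun := fun p => ⟨p.2.1, ⟨p.1.1, p.1.2, p.2.2⟩⟩ }
  have h := Nat.card_congr e
  have := Fintype.ofFinite (Sylow 5 G)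
  have := Fintype.ofFinite {H : Subgroup G // IsAltFive H}
  rw [Nat.card_sigma, Nat.card_sigma, Finset.sum_congr rfl fun S _ =>
    D.card_isAltFive_above_sylow hG S, Finset.sum_congr rfl fun H _ =>
    card_sylow_below_isAltFive hG H.2, Finset.sum_const, Finset.sum_const, Finset.card_univ,
    Finset.card_univ, ← Nat.card_eq_fintype_card, ← Nat.card_eq_fintype_card,
    smul_eq_mul, smul_eq_mul] at h
  omega

theorem card_sylow_ne_six [Finite G] (D : AltFiveData G) (hG : Nat.card G = 720) :
    Nat.card (Sylow 5 G) ≠ 6 := by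
  intro h6
  have : Fact (Nat.Prime 5) := ⟨by norm_num⟩
  have hall : ∀ S : Sylow 5 G, (S : Subgroup G) ≤ D.hom.range := by
    have hbij := (Nat.bijective_iff_injective_and_card
      (Subtype.val : {S : Sylow 5 G // (S : Subgroup G) ≤ D.hom.range} → Sylow 5 G)).mpr
        ⟨Subtype.coe_injective, by rw [h6, card_sylow_below_isAltFive hG D.isAltFive_range]⟩
    intro S
    obtain ⟨T, rfl⟩ := hbij.2 S
    exact T.2
  have hmem : ∀ w : G, w ^ 5 = 1 → w ∈ D.hom.range := by
    intro w hw
    have hp : IsPGroup 5 (Subgroup.zpowers w) := by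
      rw [IsPGroup.iff_card]
      rcases (Nat.dvd_prime (by norm_num)).mp (orderOf_dvd_of_pow_eq_one hw) with h | h
      · exact ⟨0, by rw [Nat.card_zpowers, h, pow_zero]⟩
      · exact ⟨1, by rw [Nat.card_zpowers, h, pow_one]⟩
    obtain ⟨S, hS⟩ := hp.exists_le_sylow
    exact hall S (hS (Subgroup.mem_zpowers w))
  obtain ⟨u, v, hu, hv, huv⟩ := exists_dbl5_eq_mul
  refine D.conj_notMem ?_
  have hprod : D.d * D.hom dbl5 * D.d⁻¹ =
      MulAut.conj D.d (D.hom u) * MulAut.conj D.d (D.hom v) := by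
    rw [← map_mul, ← map_mul, ← huv, MulAut.conj_apply]
  rw [hprod]
  refine mul_mem (hmem _ ?_) (hmem _ ?_)
  · rw [← map_pow, ← map_pow, hu, map_one, map_one]
  · rw [← map_pow, ← map_pow, hv, map_one, map_one]

theorem card_sylow [Finite G] (D : AltFiveData G) (hG : Nat.card G = 720) :
    Nat.card (Sylow 5 G) = 36 := by
  have : Fact (Nat.Prime 5) := ⟨by norm_num⟩
  have hdvd := (default : Sylow 5 G).card_dvd_index
  have hindex := ((default : Sylow 5 G) : Subgroup G).card_mul_index
  rw [Sylow.card_eq_multiplicity, hG, factorization_five_mul (m := 144) (by norm_num),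
    pow_one] at hindex
  replace hindex : ((default : Sylow 5 G) : Subgroup G).index = 144 := by omega
  rw [hindex] at hdvd
  have hmod := card_sylow_modEq_one 5 G
  have hthree := D.card_sylow_eq_three_mul hG
  have hsix := D.card_sylow_ne_six hG
  have hle := Nat.le_of_dvd (by norm_num) hdvd
  unfold Nat.ModEq at hmod
  generalize Nat.card (Sylow 5 G) = n at *
  interval_cases n <;> omega

theorem card_isAltFive [Finite G] (D : AltFiveData G) (hG : Nat.card G = 720) :
    Nat.card {H : Subgroup G // IsAltFive H} = 12 := by
  have h := D.card_sylow_eq_three_mul hG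
  rw [D.card_sylow hG] at h
  omega

end AltFiveData

theorem natCard_F9 : Nat.card F9 = 9 := GaloisField.card 3 2 (by norm_num)

theorem natCard_PGL29 : Nat.card PGL29 = 720 := by
  have := Fintype.ofFinite F9
  have hcenter : Nat.card (Subgroup.center (Matrix.GeneralLinearGroup (Fin 2) F9)) = 8 := by
    rw [Matrix.GeneralLinearGroup.center_eq_range_scalar,
      ← Nat.card_congr (MonoidHom.ofInjective (f := Matrix.GeneralLinearGroup.scalar (Fin 2))
        (fun a b h => ?_)).toEquiv, Nat.card_units, natCard_F9]
    have h' := congrArg (fun g : Matrix.GeneralLinearGroup (Fin 2) F9 => g.1 0 0) h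
    exact Units.ext (by simpa using h')
  have hGL : Nat.card (Matrix.GeneralLinearGroup (Fin 2) F9) = 5760 := by
    rw [Matrix.card_GL_field, ← Nat.card_eq_fintype_card, natCard_F9]
    rfl
  have h := Subgroup.card_eq_card_quotient_mul_card_subgroup
    (Subgroup.center (Matrix.GeneralLinearGroup (Fin 2) F9))
  rw [hGL, hcenter] at h
  change 5760 = Nat.card PGL29 * 8 at h
  omega

theorem nonempty_K9_ringEquiv_F9 : Nonempty (K9 ≃+* F9) := by
  have : Fact (∀ r : ZMod 3, r ^ 2 ≠ -1 + 0 * r) := ⟨by decide⟩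
  have := Fintype.ofFinite F9
  refine ⟨FiniteField.ringEquivOfCardEq ?_⟩
  rw [← Nat.card_eq_fintype_card (α := F9), natCard_F9]
  rfl

/-- An identification of the computable model with the field with nine elements. -/
noncomputable def toF9 : K9 ≃+* F9 := nonempty_K9_ringEquiv_F9.some

theorem det_map_toF9_ne_zero {A : Mat9} (hA : A.det ≠ 0) : (A.map toF9).det ≠ 0 := by
  rw [← RingEquiv.mapMatrix_apply, ← RingEquiv.map_det]
  simpa using hA

open Classical in
/-- The class in `PGL(2,9)` of an invertible matrix, and `1` for a singular matrix. -/
noncomputable def projClass (A : Mat9) : PGL29 :=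
  if h : A.det ≠ 0 then
    QuotientGroup.mk (Matrix.GeneralLinearGroup.mkOfDetNeZero _ (det_map_toF9_ne_zero h))
  else 1

theorem K9.mul_ne_zero {x y : K9} (hx : x ≠ 0) (hy : y ≠ 0) : x * y ≠ 0 := fun h =>
  (K9.eq_zero_or_eq_zero_of_mul_eq_zero x y h).elim hx hy

theorem Mat9.det_mul_ne_zero {A B : Mat9} (hA : A.det ≠ 0) (hB : B.det ≠ 0) :
    (A * B).det ≠ 0 := by
  rw [Matrix.det_mul]
  exact K9.mul_ne_zero hA hB

theorem Mat9.det_pow_ne_zero {A : Mat9} (hA : A.det ≠ 0) (n : ℕ) : (A ^ n).det ≠ 0 := by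
  induction n with
  | zero => simp
  | succ n ih =>
    rw [pow_succ]
    exact det_mul_ne_zero ih hA

theorem projClass_mul {A B : Mat9} (hA : A.det ≠ 0) (hB : B.det ≠ 0) :
    projClass (A * B) = projClass A * projClass B := by
  rw [projClass, projClass, projClass, dif_pos hA, dif_pos hB,
    dif_pos (Mat9.det_mul_ne_zero hA hB), ← QuotientGroup.mk_mul]
  refine congrArg _ (Units.ext ?_)
  exact map_mul toF9.mapMatrix A B

theorem projClass_one : projClass 1 = 1 := by
  rw [projClass, dif_pos (by simp), ← QuotientGroup.mk_one]
  refine congrArg _ (Units.ext ?_)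
  exact map_one (toF9.mapMatrix (m := Fin 2))

theorem projClass_pow {A : Mat9} (hA : A.det ≠ 0) (n : ℕ) :
    projClass (A ^ n) = projClass A ^ n := by
  induction n with
  | zero => simp [projClass_one]
  | succ n ih => rw [pow_succ, pow_succ, projClass_mul (Mat9.det_pow_ne_zero hA n) hA, ih]

theorem exists_projClass_eq (g : PGL29) : ∃ A : Mat9, A.det ≠ 0 ∧ projClass A = g := by
  obtain ⟨g, rfl⟩ := QuotientGroup.mk_surjective g
  have hmap : (toF9.symm.mapMatrix g.1).map toF9 = g.1 := by
    ext i j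
    simp
  have hdet : (toF9.symm.mapMatrix g.1).det ≠ 0 := by
    rw [← RingEquiv.map_det]
    simpa using Matrix.GeneralLinearGroup.det_ne_zero g
  refine ⟨toF9.symm.mapMatrix g.1, hdet, ?_⟩
  rw [projClass, dif_pos hdet]
  exact congrArg _ (Units.ext hmap)

theorem projClass_eq_iff {A B : Mat9} (hA : A.det ≠ 0) (hB : B.det ≠ 0) :
    projClass A = projClass B ↔ ∃ s : K9, A = s • B := by
  rw [projClass, projClass, dif_pos hA, dif_pos hB, eq_comm, QuotientGroup.eq,
    Matrix.GeneralLinearGroup.mem_center_iff_val_mem_range_scalar]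
  set a := Matrix.GeneralLinearGroup.mkOfDetNeZero _ (det_map_toF9_ne_zero hA)
  set b := Matrix.GeneralLinearGroup.mkOfDetNeZero _ (det_map_toF9_ne_zero hB)
  have ha : a.1 = A.map toF9 := rfl
  have hb : b.1 = B.map toF9 := rfl
  constructor
  · rintro ⟨r, hr⟩
    have h : a.1 = b.1 * (b⁻¹ * a).1 := by rw [← Units.val_mul, mul_inv_cancel_left]
    rw [← hr, ha, hb] at h
    refine ⟨toF9.symm r, Matrix.ext fun i j => toF9.injective ?_⟩
    have h' := congrFun (congrFun h i) j
    simpa [mul_comm] using h'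
  · rintro ⟨s, hs⟩
    refine ⟨toF9 s, ?_⟩
    have h : a.1 = b.1 * Matrix.scalar (Fin 2) (toF9 s) := by
      rw [ha, hb, hs]
      ext i j
      simp [mul_comm]
    rw [Units.val_mul, h, ← mul_assoc, ← Units.val_mul, inv_mul_cancel, Units.val_one, one_mul]

theorem projClass_mul_rot5 (σ : alternatingGroup (Fin 5)) :
    projClass (altMat (σ * rot5)) = projClass (altMat σ) * projClass dMat ^ 2 := by
  have hd := Mat9.det_mul_ne_zero det_dMat_ne_zero det_dMat_ne_zero
  rw [sq, ← projClass_mul det_dMat_ne_zero det_dMat_ne_zero,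
    ← projClass_mul (det_altMat_ne_zero σ) hd,
    projClass_eq_iff (det_altMat_ne_zero _) (Mat9.det_mul_ne_zero (det_altMat_ne_zero σ) hd)]
  exact altMat_mul_rot5 σ

theorem projClass_mul_dbl5 (σ : alternatingGroup (Fin 5)) :
    projClass (altMat (σ * dbl5)) = projClass (altMat σ) * projClass xMat := by
  rw [← projClass_mul (det_altMat_ne_zero σ) det_xMat_ne_zero, projClass_eq_iff
    (det_altMat_ne_zero _) (Mat9.det_mul_ne_zero (det_altMat_ne_zero σ) det_xMat_ne_zero)]
  exact altMat_mul_dbl5 σ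

theorem projClass_altMat_rot5 : projClass (altMat rot5) = projClass dMat ^ 2 := by
  simpa [altMat_one, projClass_one] using projClass_mul_rot5 1

theorem projClass_altMat_dbl5 : projClass (altMat dbl5) = projClass xMat := by
  simpa [altMat_one, projClass_one] using projClass_mul_dbl5 1

/-- The embedding of `A₅` into `PGL(2,9)`. -/
noncomputable def altHom : alternatingGroup (Fin 5) →* PGL29 where
  toFun σ := projClass (altMat σ)
  map_one' := by rw [altMat_one, projClass_one]
  map_mul' σ τ := by
    have hτ : τ ∈ Submonoid.closure {rot5, dbl5} := by
      rw [← Subgroup.closure_toSubmonoid_of_finite, closure_rot5_dbl5]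
      trivial
    induction hτ using Submonoid.closure_induction generalizing σ with
    | mem τ h =>
      rcases h with rfl | rfl
      · rw [projClass_mul_rot5, projClass_altMat_rot5]
      · rw [projClass_mul_dbl5, projClass_altMat_dbl5]
    | one => rw [mul_one, altMat_one, projClass_one, mul_one]
    | mul τ υ _ _ hτ hυ => rw [← mul_assoc, hυ, hτ, hυ τ, mul_assoc]

/-- A matrix whose projective class is an involution has trace zero. -/
theorem Mat9.eq_neg_of_sq {A : Mat9} (hA : A.det ≠ 0) (h2 : projClass A ^ 2 = 1)
    (h1 : projClass A ≠ 1) : A 1 1 = -A 0 0 := by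
  rw [← projClass_pow hA, ← projClass_one, projClass_eq_iff (det_pow_ne_zero hA 2) (by simp)] at h2
  obtain ⟨s, hs⟩ := h2
  have hs' : A ^ 2 = s • 1 := hs
  rw [sq] at hs'
  have h (i j : Fin 2) := congrFun (congrFun hs' i) j
  have h00 := h 0 0
  have h01 := h 0 1
  have h10 := h 1 0
  have h11 := h 1 1
  simp [Matrix.mul_apply, Fin.sum_univ_two] at h00 h01 h10 h11
  by_contra hne
  have htr : A 0 0 + A 1 1 ≠ 0 := fun h => hne (eq_neg_of_add_eq_zero_right h)
  have key {y : K9} (hy : (A 0 0 + A 1 1) * y = 0) : y = 0 :=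
    (K9.eq_zero_or_eq_zero_of_mul_eq_zero _ _ hy).resolve_left htr
  have hb : A 0 1 = 0 := key (by linear_combination h01)
  have hc : A 1 0 = 0 := key (by linear_combination h10)
  have hd : A 0 0 - A 1 1 = 0 := key (by linear_combination h00 - h11)
  refine h1 ?_
  rw [← projClass_one, projClass_eq_iff hA (by simp)]
  refine ⟨A 0 0, Matrix.ext fun i j => ?_⟩
  fin_cases i <;> fin_cases j <;> simp [hb, hc, ← sub_eq_zero.mp hd]

/-- A matrix whose cube is scalar is either unipotent up to a scalar, or itself scalar. -/
theorem Mat9.trace_sq_eq_det_or {p q r u s : K9} (h : !![p, q; r, u] ^ 3 = s • (1 : Mat9)) :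
    (p + u) * (p + u) = p * u - q * r ∨ q = 0 ∧ r = 0 ∧ p = u := by
  rw [pow_three] at h
  have h' (i j : Fin 2) := congrFun (congrFun h i) j
  have h00 := h' 0 0
  have h01 := h' 0 1
  have h10 := h' 1 0
  have h11 := h' 1 1
  simp [Matrix.mul_apply, Fin.sum_univ_two] at h00 h01 h10 h11
  by_cases hne : (p + u) * (p + u) - (p * u - q * r) = 0
  · exact .inl (sub_eq_zero.mp hne)
  have key {y : K9} (hy : ((p + u) * (p + u) - (p * u - q * r)) * y = 0) : y = 0 :=
    (K9.eq_zero_or_eq_zero_of_mul_eq_zero _ _ hy).resolve_left hne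
  exact .inr ⟨key (by linear_combination h01), key (by linear_combination h10),
    sub_eq_zero.mp (key (by linear_combination h00 - h11))⟩

theorem exists_conj_projClass (y : PGL29) (h2 : y ^ 2 = 1) (h1 : y ≠ 1)
    (h3 : (y * projClass dMat ^ 2) ^ 3 = 1) :
    ∃ i : ℕ, y = projClass dMat ^ i * projClass xMat * (projClass dMat ^ i)⁻¹ := by
  obtain ⟨A, hA, rfl⟩ := exists_projClass_eq y
  have htr := Mat9.eq_neg_of_sq hA h2 h1
  have hd2 := Mat9.det_pow_ne_zero det_dMat_ne_zero 2
  have hM := Mat9.det_mul_ne_zero hA hd2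
  rw [← projClass_pow det_dMat_ne_zero, ← projClass_mul hA hd2, ← projClass_pow hM,
    ← projClass_one, projClass_eq_iff (Mat9.det_pow_ne_zero hM 3) (by simp)] at h3
  obtain ⟨a, b, c, d, rfl⟩ : ∃ a b c d, A = !![a, b; c, d] :=
    ⟨_, _, _, _, Matrix.eta_fin_two A⟩
  obtain rfl : d = -a := by simpa using htr
  have hdet : a * a + b * c ≠ 0 := by
    intro h
    apply hA
    rw [Matrix.det_fin_two_of]
    linear_combination -h
  obtain ⟨s, hs⟩ := h3
  have hmul : !![a, b; c, -a] * dMat ^ 2 = !![a * ⟨1, 1⟩ + b, a * ⟨1, 1⟩ + b * ⟨2, 1⟩;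
      c * ⟨1, 1⟩ - a, c * ⟨1, 1⟩ - a * ⟨2, 1⟩] := by
    rw [dMat_sq, Matrix.mul_fin_two]
    simp only [mul_one, neg_mul, sub_eq_add_neg]
  rw [hmul] at hs
  have hcond : (b + ⟨1, 1⟩ * c - a) * (b + ⟨1, 1⟩ * c - a) = -(a * a + b * c) * ⟨0, 2⟩ := by
    rcases Mat9.trace_sq_eq_det_or hs with h | ⟨hq, hr, hpu⟩
    · have h₁ : (⟨2, 1⟩ : K9) = ⟨1, 1⟩ + 1 := by decide
      have h₂ : (⟨0, 2⟩ : K9) = ⟨1, 1⟩ * ⟨1, 1⟩ := by decide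
      rw [h₁] at h
      rw [h₂]
      linear_combination h
    · exact absurd (det_eq_zero_of_mul_dMat_sq_scalar a b c hq hr hpu) hdet
  obtain ⟨i, t, ht⟩ := exists_eq_smul_conjMat a b c hdet hcond
  obtain ⟨r, hr⟩ := conjMat_mul_dMat_pow i
  have hdi := Mat9.det_pow_ne_zero det_dMat_ne_zero (i : ℕ)
  refine ⟨i, ?_⟩
  rw [eq_mul_inv_iff_mul_eq, ← projClass_pow det_dMat_ne_zero, ← projClass_mul hA hdi,
    ← projClass_mul hdi det_xMat_ne_zero, eq_comm, projClass_eq_iff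
      (Mat9.det_mul_ne_zero hdi det_xMat_ne_zero) (Mat9.det_mul_ne_zero hA hdi)]
  exact ⟨r * t, by rw [hr, ht, Matrix.smul_mul, smul_smul]⟩

theorem altHom_apply (σ : alternatingGroup (Fin 5)) : altHom σ = projClass (altMat σ) := by
  simp only [altHom, MonoidHom.coe_mk, OneHom.coe_mk]

theorem conj_projClass_notMem_range :
    projClass dMat * projClass xMat * (projClass dMat)⁻¹ ∉ altHom.range := by
  rintro ⟨σ, hσ⟩
  rw [altHom_apply, eq_mul_inv_iff_mul_eq,
    ← projClass_mul (det_altMat_ne_zero σ) det_dMat_ne_zero,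
    ← projClass_mul det_dMat_ne_zero det_xMat_ne_zero,
    projClass_eq_iff (Mat9.det_mul_ne_zero (det_altMat_ne_zero σ) det_dMat_ne_zero)
      (Mat9.det_mul_ne_zero det_dMat_ne_zero det_xMat_ne_zero)] at hσ
  obtain ⟨s, hs⟩ := hσ
  exact altMat_mul_dMat_ne σ s hs

theorem projClass_dMat_sq_ne_one : projClass dMat ^ 2 ≠ 1 := by
  rw [← projClass_pow det_dMat_ne_zero, ← projClass_one, Ne,
    projClass_eq_iff (Mat9.det_pow_ne_zero det_dMat_ne_zero 2) (by simp)]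
  decide +kernel

theorem altHom_dbl5 : altHom dbl5 = projClass xMat := by
  rw [altHom_apply, projClass_altMat_dbl5]

/-- The copy of `A₅` in `PGL(2,9)`. -/
noncomputable def altFiveData : AltFiveData PGL29 where
  hom := altHom
  d := projClass dMat
  map_rot5 := by rw [altHom_apply, projClass_altMat_rot5]
  sq_ne_one := projClass_dMat_sq_ne_one
  exists_conj := by
    rw [altHom_dbl5]
    exact exists_conj_projClass
  conj_notMem := by
    rw [altHom_dbl5]
    exact conj_projClass_notMem_range

/-- `PGL(2,9)` has exactly 12 subgroups isomorphic to `A₅`, forming a single conjugacy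
class, and each of its 36 Sylow 5-subgroups lies in exactly two of them. -/
theorem stmt13 :
    Nat.card {H : Subgroup PGL29 // Nonempty (H ≃* alternatingGroup (Fin 5))} = 12 ∧
    (∀ H K : Subgroup PGL29,
      Nonempty (H ≃* alternatingGroup (Fin 5)) → Nonempty (K ≃* alternatingGroup (Fin 5)) →
      ∃ g : PGL29, H.map (MulAut.conj g).toMonoidHom = K) ∧
    Nat.card (Sylow 5 PGL29) = 36 ∧
    (∀ S : Sylow 5 PGL29,
      Nat.card {H : Subgroup PGL29 //
        Nonempty (H ≃* alternatingGroup (Fin 5)) ∧ (S : Subgroup PGL29) ≤ H} = 2) := by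
  exact ⟨altFiveData.card_isAltFive natCard_PGL29,
    fun _ _ hH hK => altFiveData.isAltFive_conjugate natCard_PGL29 hH hK,
    altFiveData.card_sylow natCard_PGL29,
    altFiveData.card_isAltFive_above_sylow natCard_PGL29⟩
end
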